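/- Let H be an m×n complex matrix, let S be a subset of its row indices and T a subset of its column indices, and let H' = H[S, T] be the submatrix of H with rows in S and columns in T. Then for every real ρ ≥ 0, det(I_{|S|} + ρ·H'·H'ᴴ) ≤ det(I_m + ρ·H·Hᴴ). -/

import Mathlib

open Matrix

open scoped ComplexOrder in
theorem aux_sum {m n : Type*} [Fintype m] [DecidableEq m] [DecidableEq n]
    (M : Matrix m m ℂ) (hM : M.PosDef) (u : n → m → ℂ) (D : Finset n) :
    (M + ∑ j ∈ D, vecMulVec (u j) (star (u j))).PosDef ∧
      M.det ≤ (M + ∑ j ∈ D, vecMulVec (u j) (star (u j))).det := by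
  induction D using Finset.induction_on with
  | empty => simpa using hM
  | insert a s ha ih =>
    obtain ⟨h1, h2⟩ := ih
    rw [Finset.sum_insert ha, add_comm (vecMulVec _ _), ← add_assoc]
    set N := M + ∑ j ∈ s, vecMulVec (u j) (star (u j)) with hN
    refine ⟨h1.add_posSemidef (posSemidef_vecMulVec_self_star _), h2.trans ?_⟩
    have hu : IsUnit N.det := h1.det_pos.ne'.isUnit
    rw [vecMulVec_eq Unit (u a), det_add_replicateCol_mul_replicateRow hu]
    have h3 : 0 ≤ star (u a) ⬝ᵥ (N⁻¹ *ᵥ u a) := h1.inv.posSemidef.dotProduct_mulVec_nonneg _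
    have h4 : (1 + replicateRow Unit (star (u a)) * N⁻¹ * replicateCol Unit (u a)).det
        = 1 + star (u a) ⬝ᵥ (N⁻¹ *ᵥ u a) := by
      rw [det_unique, Matrix.mul_assoc, ← replicateCol_mulVec]
      simp [Matrix.mul_apply, dotProduct]
    rw [h4]
    exact le_mul_of_one_le_right h1.det_pos.le (le_add_of_nonneg_right h3)

theorem aux_mul {m n : Type*} [Fintype m] [Fintype n] [DecidableEq m] 
    (A : Matrix m n ℂ) : A * Aᴴ = ∑ j, vecMulVec (A.col j) (star (A.col j)) := by
  ext i k
  simp [Matrix.mul_apply, Matrix.sum_apply, vecMulVec_apply]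

open scoped ComplexOrder in
theorem aux_col {m n : Type*} [Fintype m] [Fintype n] [DecidableEq m] [DecidableEq n]
    (A : Matrix m n ℂ) (T : Finset n) :
    (1 + A.submatrix id (fun j : {j // j ∈ T} => (j : n)) *
      (A.submatrix id (fun j : {j // j ∈ T} => (j : n)))ᴴ).det ≤ (1 + A * Aᴴ).det := by
  have e : A.submatrix id (fun j : {j // j ∈ T} => (j : n)) *
      (A.submatrix id (fun j : {j // j ∈ T} => (j : n)))ᴴ
      = ∑ j ∈ T, vecMulVec (A.col j) (star (A.col j)) := by
    rw [aux_mul, ← Finset.sum_coe_sort T]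
    rfl
  rw [e, aux_mul A, ← Finset.sum_add_sum_compl T, ← add_assoc]
  exact (aux_sum _ (aux_sum 1 PosDef.one _ T).1 _ Tᶜ).2

open scoped ComplexOrder in
theorem aux_row {m n : Type*} [Fintype m] [Fintype n] [DecidableEq m] [DecidableEq n]
    (A : Matrix m n ℂ) (S : Finset m) :
    (1 + A.submatrix (fun j : {j // j ∈ S} => (j : m)) id *
      (A.submatrix (fun j : {j // j ∈ S} => (j : m)) id)ᴴ).det ≤ (1 + A * Aᴴ).det := by
  have h := aux_col Aᴴ S
  rw [det_one_add_mul_comm, det_one_add_mul_comm A]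
  simpa using h

/-- Dropping rows and columns can only decrease the Gaussian mutual information:
for an `m×n` complex matrix `H`, a set `S` of row indices and a set `T` of column indices,
the submatrix `H' = H[S,T]` satisfies `det(I + ρ·H'·H'ᴴ) ≤ det(I + ρ·H·Hᴴ)` for all `ρ ≥ 0`. -/
theorem det_one_add_smul_submatrix_mul_conjTranspose_le
    (m n : ℕ) (H : Matrix (Fin m) (Fin n) ℂ)
    (S : Finset (Fin m)) (T : Finset (Fin n)) (ρ : ℝ) (hρ : 0 ≤ ρ) :
    (((1 : Matrix {i // i ∈ S} {i // i ∈ S} ℂ)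
        + (ρ : ℂ) • (H.submatrix (fun i : {i // i ∈ S} => (i : Fin m))
              (fun j : {j // j ∈ T} => (j : Fin n))
          * (H.submatrix (fun i : {i // i ∈ S} => (i : Fin m))
              (fun j : {j // j ∈ T} => (j : Fin n)))ᴴ)).det).re
      ≤ (((1 : Matrix (Fin m) (Fin m) ℂ) + (ρ : ℂ) • (H * Hᴴ)).det).re := by
  have key : ∀ {a b : Type} [Fintype b] (B : Matrix a b ℂ),
      (ρ : ℂ) • (B * Bᴴ) = (((√ρ : ℝ) : ℂ) • B) * (((√ρ : ℝ) : ℂ) • B)ᴴ := by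
    intro a b _ B
    rw [conjTranspose_smul, Matrix.smul_mul, Matrix.mul_smul, smul_smul]
    congr 1
    simp only [Complex.star_def, Complex.conj_ofReal]
    rw [← Complex.ofReal_mul, Real.mul_self_sqrt hρ]
  rw [key, key]
  set A := ((√ρ : ℝ) : ℂ) • H with hA
  have h1 := aux_col (A.submatrix (fun i : {i // i ∈ S} => (i : Fin m)) id) T
  open scoped ComplexOrder in
  exact (Complex.le_def.1 (h1.trans (aux_row A S))).1
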